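/- Define a_n^{(d)} for d ≥ 1 by a_n^{(1)} = n+1 and a_n^{(d+1)} = 2∑_{k=0}^n a_k^{(d)} − a_n^{(d)}. Then for every d ≥ 1 and n ≥ 0, a_n^{(d)} = ∑_{k=0}^{d-1} C(d-1,k)·C(d+n-k, d). -/

import Mathlib

open Finset

/-- The sequence `a d n` defined by `a 1 n = n + 1` and
`a (d+1) n = 2 * ∑_{k=0}^n a d k - a d n`. -/
def a : ℕ → ℕ → ℕ
  | 0, _ => 0
  | 1, n => n + 1
  | d + 2, n => 2 * ∑ k ∈ Finset.range (n + 1), a (d + 1) k - a (d + 1) n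

/-- Pascal's rule, summed against an arbitrary sequence. -/
theorem sum_choose_succ_mul_eq (e : ℕ) (f : ℕ → ℕ) :
    ∑ k ∈ Finset.range (e + 2), (e + 1).choose k * f k =
      ∑ k ∈ Finset.range (e + 1), e.choose k * (f k + f (k + 1)) := by
  have h := Finset.sum_choose_succ_mul (R := ℕ) (fun i _ => f i) e
  simp only [Nat.cast_id] at h
  rw [h, ← Finset.sum_add_distrib]
  exact Finset.sum_congr rfl fun k _ => by ring

/-- A hockey-stick identity for binomial coefficients with a shifted upper argument. -/
theorem sum_range_choose_add_sub (e k n : ℕ) (hk : k ≤ e) :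
    ∑ j ∈ Finset.range (n + 1), (e + 1 + j - k).choose (e + 1) =
      (e + 2 + n - k).choose (e + 2) := by
  induction n with
  | zero =>
    rw [Finset.sum_range_one, show e + 2 + 0 - k = (e + 1 + 0 - k) + 1 by omega,
      Nat.choose_succ_succ' _ (e + 1),
      Nat.choose_eq_zero_of_lt (show e + 1 + 0 - k < e + 1 + 1 by omega)]
    rfl
  | succ n ih =>
    rw [Finset.sum_range_succ, ih, show e + 2 + (n + 1) - k = (e + 1 + (n + 1) - k) + 1 by omega,
      Nat.choose_succ_succ' _ (e + 1), show e + 2 + n - k = e + 1 + (n + 1) - k by omega, add_comm]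

/-- The closed form satisfies the recurrence defining `a`. -/
theorem sum_choose_mul_choose_add (e n : ℕ) :
    ∑ k ∈ Finset.range (e + 2), (e + 1).choose k * (e + 2 + n - k).choose (e + 2) +
        ∑ k ∈ Finset.range (e + 1), e.choose k * (e + 1 + n - k).choose (e + 1) =
      2 * ∑ j ∈ Finset.range (n + 1), ∑ k ∈ Finset.range (e + 1),
        e.choose k * (e + 1 + j - k).choose (e + 1) := by
  rw [sum_choose_succ_mul_eq e fun k => (e + 2 + n - k).choose (e + 2), Finset.sum_comm,
    ← Finset.sum_add_distrib, Finset.mul_sum]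
  refine Finset.sum_congr rfl fun k hk => ?_
  have hk' : k ≤ e := Nat.lt_succ_iff.mp (Finset.mem_range.mp hk)
  rw [← Finset.mul_sum, sum_range_choose_add_sub e k n hk',
    show e + 2 + n - k = (e + 1 + n - k) + 1 by omega,
    show e + 2 + n - (k + 1) = e + 1 + n - k by omega, Nat.choose_succ_succ' _ (e + 1)]
  ring

theorem stmt_6 (d n : ℕ) (hd : 1 ≤ d) :
    a d n = ∑ k ∈ Finset.range d, (d - 1).choose k * (d + n - k).choose d := by
  induction d, hd using Nat.le_induction generalizing n with
  | base => simp [a, add_comm]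
  | succ d hd ih =>
    obtain ⟨e, rfl⟩ := Nat.exists_eq_add_of_le' hd
    simp only [a, ih, Nat.add_sub_cancel]
    exact Nat.sub_eq_of_eq_add (sum_choose_mul_choose_add e n).symm
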